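/- Suppose next-token consistency holds at every time t with 1 ≤ t ≤ T−1 and transition consistency holds at every time t with 1 ≤ t ≤ T−2. Then for every t with 1 ≤ t ≤ T−1 and every w ∈ 𝒳^{T−t}, there exists a measurable function φ_w : H → ℝ such that μ[X_{t+1:T} = w ∣ σ(X_{1:t})] = φ_w(h_t) μ-almost surely; in particular, the conditional law of the future tokens given the full history admits a σ(h_t)-measurable version. -/

import Mathlib

open MeasureTheory ProbabilityTheory

noncomputable section

/-- The tuple of tokens `(X_{s+1}, …, X_{s+n})`. -/
def tup {Ω 𝒳 : Type*} (X : ℕ → Ω → 𝒳) (s n : ℕ) (ω : Ω) : Fin n → 𝒳 :=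
  fun i => X (s + 1 + (i : ℕ)) ω

/-- Real-valued indicator of a set. -/
def ind {Ω : Type*} (A : Set Ω) : Ω → ℝ := A.indicator 1

theorem aux_ind_integrable {Ω : Type*} [MeasurableSpace Ω] (μ : Measure Ω) [IsProbabilityMeasure μ]
    {A : Set Ω} (hA : MeasurableSet A) : Integrable (ind A) μ :=
  (integrable_const (1 : ℝ)).indicator hA

theorem aux_mul_ind {Ω : Type*} (A : Set Ω) (f : Ω → ℝ) : f * ind A = A.indicator f := by
  classical
  ext ω
  by_cases hω : ω ∈ A <;> simp [ind, hω]

theorem aux_tup_meas {Ω 𝒳 : Type*} [MeasurableSpace Ω] [MeasurableSpace 𝒳]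
    (X : ℕ → Ω → 𝒳) (hX : ∀ t, Measurable (X t)) (s n : ℕ) : Measurable (tup X s n) :=
  measurable_pi_lambda _ fun i => hX _

theorem aux_tup_split {Ω 𝒳 : Type*} (X : ℕ → Ω → 𝒳) (t n : ℕ) (w : Fin (n + 1) → 𝒳) (ω : Ω) :
    tup X t (n + 1) ω = w ↔ X (t + 1) ω = w 0 ∧ tup X (t + 1) n ω = Fin.tail w := by
  constructor
  · rintro rfl
    refine ⟨rfl, ?_⟩
    ext i
    simp only [tup, Fin.tail, Fin.val_succ]
    congr 1
    omega
  · rintro ⟨h0, h1⟩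
    ext i
    refine Fin.cases ?_ (fun j => ?_) i
    · simpa [tup] using h0
    · have := congrFun h1 j
      simp only [tup, Fin.tail, Fin.val_succ] at this ⊢
      rw [← this]
      congr 1
      omega

theorem aux_trans {Ω H E : Type*} [MeasurableSpace Ω] [MeasurableSpace H]
    [MeasurableSingletonClass H] [MeasurableSpace E]
    (μ : Measure Ω) (Z : Ω → H) (S : Finset H) (hS : ∀ ω, Z ω ∈ S) (V : Ω → E)
    (hZ : ∀ B : Set H, MeasurableSet B →
      (μ[ind {ω | Z ω ∈ B} | MeasurableSpace.comap V inferInstance]) =ᵐ[μ] ind {ω | Z ω ∈ B})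
    (φ : H → ℝ) :
    ∃ ψ : E → ℝ, Measurable ψ ∧ (fun ω => φ (Z ω)) =ᵐ[μ] fun ω => ψ (V ω) := by
  classical
  have key : ∀ v : H, ∃ ψ : E → ℝ, Measurable ψ ∧
      ind {ω | Z ω ∈ ({v} : Set H)} =ᵐ[μ] fun ω => ψ (V ω) := by
    intro v
    have hm : StronglyMeasurable[MeasurableSpace.comap V inferInstance]
      (μ[ind {ω | Z ω ∈ ({v} : Set H)} | MeasurableSpace.comap V inferInstance]) :=
      stronglyMeasurable_condExp
    obtain ⟨ψ, hψ, he⟩ := hm.measurable.exists_eq_measurable_comp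
    refine ⟨ψ, hψ, ?_⟩
    have := hZ {v} (measurableSet_singleton v)
    rw [he] at this
    exact this.symm
  choose ψ hψ he using key
  refine ⟨fun e => ∑ v ∈ S, φ v * ψ v e, ?_, ?_⟩
  · exact Finset.measurable_fun_sum _ fun v _ => (hψ v).const_mul _
  · have : ∀ᵐ ω ∂μ, ∀ v ∈ S, ind {ω | Z ω ∈ ({v} : Set H)} ω = ψ v (V ω) :=
      (Finset.eventually_all S).2 fun v _ => he v
    filter_upwards [this] with ω hω
    rw [Finset.sum_congr rfl fun v hv => by rw [← hω v hv]]
    rw [Finset.sum_eq_single (Z ω)]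
    · simp [ind]
    · intro b _ hb
      simp [ind, hb.symm]
    · intro hn
      exact absurd (hS ω) hn

/-- Under next-token consistency (all `1 ≤ t ≤ T-1`) and transition
consistency (all `1 ≤ t ≤ T-2`), for every `1 ≤ t ≤ T-1` and every future word
`w ∈ 𝒳^{T-t}` there is a measurable `φ_w : H → ℝ` with
`μ[X_{t+1:T} = w ∣ σ(X_{1:t})] = φ_w (h t)` μ-a.s. -/
theorem conditional_law_factors_through_hidden_state
    {Ω 𝒳 H : Type*}
    [MeasurableSpace Ω] [MeasurableSpace 𝒳] [DiscreteMeasurableSpace 𝒳]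
    [Fintype 𝒳] [Nonempty 𝒳]
    [MeasurableSpace H] [StandardBorelSpace H]
    (μ : Measure Ω) [IsProbabilityMeasure μ]
    (T : ℕ) (hT : 2 ≤ T)
    (X : ℕ → Ω → 𝒳) (hX : ∀ t, Measurable (X t))
    (h : ℕ → Ω → H) (g : (t : ℕ) → (Fin t → 𝒳) → H)
    (hg : ∀ t, 1 ≤ t → t ≤ T → Measurable (g t))
    (hgh : ∀ t, 1 ≤ t → t ≤ T → ∀ ω, h t ω = g t (tup X 0 t ω))
    -- next-token consistency at every time `1 ≤ t ≤ T-1`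
    (hnext : ∀ t, 1 ≤ t → t ≤ T - 1 → ∀ a : 𝒳,
      (μ[ind {ω | X (t + 1) ω = a} | MeasurableSpace.comap (h t) inferInstance])
        =ᵐ[μ]
      (μ[ind {ω | X (t + 1) ω = a} | MeasurableSpace.comap (tup X 0 t) inferInstance]))
    -- transition consistency at every time `1 ≤ t ≤ T-2`
    (htrans : ∀ t, 1 ≤ t → t ≤ T - 2 → ∀ B : Set H, MeasurableSet B →
      (μ[ind {ω | h (t + 1) ω ∈ B} |
          MeasurableSpace.comap (fun ω => (h t ω, X (t + 1) ω)) inferInstance])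
        =ᵐ[μ]
      (μ[ind {ω | h (t + 1) ω ∈ B} |
          MeasurableSpace.comap (tup X 0 (t + 1)) inferInstance])) :
    -- conclusion: the full-horizon conditional law admits a `σ(h t)`-measurable version
    ∀ t, 1 ≤ t → t ≤ T - 1 → ∀ w : Fin (T - t) → 𝒳,
      ∃ φ : H → ℝ, Measurable φ ∧
        (μ[ind {ω | tup X t (T - t) ω = w} |
            MeasurableSpace.comap (tup X 0 t) inferInstance])
          =ᵐ[μ] (fun ω => φ (h t ω)) := by
  classical
  have hXm := aux_tup_meas X hX
  have hle : ∀ t, MeasurableSpace.comap (tup X 0 t) inferInstance ≤ (inferInstance : MeasurableSpace Ω) :=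
    fun t => (hXm 0 t).comap_le
  have hhm : ∀ t, 1 ≤ t → t ≤ T →
      Measurable[MeasurableSpace.comap (tup X 0 t) inferInstance] (h t) := by
    intro t h1 h2
    have : h t = g t ∘ tup X 0 t := funext (hgh t h1 h2)
    rw [this]
    exact (hg t h1 h2).comp (comap_measurable _)
  have hmono : ∀ t, MeasurableSpace.comap (tup X 0 t) inferInstance
      ≤ MeasurableSpace.comap (tup X 0 (t + 1)) inferInstance := by
    intro t
    have : tup X 0 t = (fun (x : Fin (t + 1) → 𝒳) (i : Fin t) => x i.castSucc) ∘ tup X 0 (t + 1) := rfl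
    rw [this, ← MeasurableSpace.comap_comp]
    exact MeasurableSpace.comap_mono
      (measurable_pi_lambda _ fun i => measurable_pi_apply _).comap_le
  have hXlast : ∀ t, Measurable[MeasurableSpace.comap (tup X 0 (t + 1)) inferInstance] (X (t + 1)) := by
    intro t
    have : X (t + 1) = (fun (x : Fin (t + 1) → 𝒳) => x (Fin.last t)) ∘ tup X 0 (t + 1) := by
      ext ω
      simp only [tup, Function.comp, Fin.val_last]
      congr 1
      omega
    have h2 : Measurable[MeasurableSpace.comap (tup X 0 (t + 1)) inferInstance]
      ((fun (x : Fin (t + 1) → 𝒳) => x (Fin.last t)) ∘ tup X 0 (t + 1)) :=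
      (measurable_pi_apply _).comp (comap_measurable _)
    rwa [← this] at h2
  have hint : ∀ t, 1 ≤ t → t ≤ T → ∀ f : H → ℝ, Integrable (fun ω => f (h t ω)) μ := by
    intro t h1 h2 f
    have : (fun ω => f (h t ω)) = (fun x => f (g t x)) ∘ tup X 0 t := by
      ext ω
      simp [hgh t h1 h2]
    rw [this]
    exact Integrable.of_finite.comp_measurable (hXm 0 t)
  have hone : ∀ t, 1 ≤ t → t ≤ T - 1 → ∀ a : 𝒳, ∃ φ : H → ℝ, Measurable φ ∧
      (μ[ind {ω | X (t + 1) ω = a} | MeasurableSpace.comap (tup X 0 t) inferInstance])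
        =ᵐ[μ] (fun ω => φ (h t ω)) := by
    intro t h1 h2 a
    have hm : StronglyMeasurable[MeasurableSpace.comap (h t) inferInstance]
      (μ[ind {ω | X (t + 1) ω = a} | MeasurableSpace.comap (h t) inferInstance]) :=
      stronglyMeasurable_condExp
    obtain ⟨φ, hφ, he⟩ := hm.measurable.exists_eq_measurable_comp
    refine ⟨φ, hφ, ?_⟩
    have := hnext t h1 h2 a
    rw [he] at this
    exact this.symm
  have main : ∀ n t, 1 ≤ t → t + n + 1 = T → ∀ w : Fin (n + 1) → 𝒳,
      ∃ φ : H → ℝ, Measurable φ ∧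
        (μ[ind {ω | tup X t (n + 1) ω = w} |
            MeasurableSpace.comap (tup X 0 t) inferInstance])
          =ᵐ[μ] (fun ω => φ (h t ω)) := by
    intro n
    induction n with
    | zero =>
      intro t h1 h2 w
      have : {ω | tup X t (0 + 1) ω = w} = {ω | X (t + 1) ω = w 0} := by
        ext ω
        simp only [Set.mem_setOf_eq, aux_tup_split]
        exact and_iff_left (Subsingleton.elim _ _)
      rw [this]
      exact hone t h1 (by omega) _
    | succ n ih =>
      intro t h1 h2 w
      obtain ⟨φ, hφ, hφe⟩ := ih (t + 1) (by omega) (by omega) (Fin.tail w)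
      obtain ⟨χ, hχ, hχe⟩ := hone t h1 (by omega) (w 0)
      obtain ⟨ψ, hψ, hψe⟩ := aux_trans μ (h (t + 1)) (Finset.univ.image (g (t + 1)))
        (fun ω => by
          rw [hgh (t + 1) (by omega) (by omega)]
          exact Finset.mem_image_of_mem _ (Finset.mem_univ _))
        (fun ω => (h t ω, X (t + 1) ω))
        (fun B hB => by
          have hBm : MeasurableSet[MeasurableSpace.comap (tup X 0 (t + 1)) inferInstance]
            {ω | h (t + 1) ω ∈ B} := hhm (t + 1) (by omega) (by omega) hB
          refine (htrans t h1 (by omega) B hB).trans (Filter.EventuallyEq.of_eq ?_)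
          refine condExp_of_stronglyMeasurable (hle (t + 1)) ?_
            (aux_ind_integrable μ (hle _ _ hBm))
          exact stronglyMeasurable_one.indicator hBm) φ
      set A : Set Ω := {ω | X (t + 1) ω = w 0} with hA
      set C : Set Ω := {ω | tup X (t + 1) (n + 1) ω = Fin.tail w} with hC
      have hAm : MeasurableSet[MeasurableSpace.comap (tup X 0 (t + 1)) inferInstance] A :=
        hXlast t (measurableSet_singleton (w 0))
      have hAm' : MeasurableSet A := hle _ _ hAm
      have hCm : MeasurableSet C := hXm _ _ (measurableSet_singleton _)
      have hAC : ind {ω | tup X t (n + 1 + 1) ω = w} = ind C * ind A := by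
        have : {ω | tup X t (n + 1 + 1) ω = w} = A ∩ C := by
          ext ω
          exact aux_tup_split X t (n + 1) w ω
        rw [aux_mul_ind, this, ind, ind, Set.indicator_indicator]
      refine ⟨fun x => ψ (x, w 0) * χ x,
        (hψ.comp (measurable_id.prodMk measurable_const)).mul hχ, ?_⟩
      have hi : Integrable (fun ω => ψ (h t ω, w 0)) μ :=
        hint t h1 (by omega) fun x => ψ (x, w 0)
      have e1 : μ[ind C * ind A | MeasurableSpace.comap (tup X 0 (t + 1)) inferInstance]
          =ᵐ[μ] (fun ω => ψ (h t ω, w 0)) * ind A := by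
        have p := condExp_mul_of_stronglyMeasurable_right (μ := μ)
          (m := MeasurableSpace.comap (tup X 0 (t + 1)) inferInstance)
          (f := ind C) (g := ind A) (stronglyMeasurable_one.indicator hAm)
          (by rw [aux_mul_ind]; exact (aux_ind_integrable μ hCm).indicator hAm')
          (aux_ind_integrable μ hCm)
        filter_upwards [p, hφe, hψe] with ω q1 q2 q3
        rw [q1]
        simp only [Pi.mul_apply]
        rw [q2, q3]
        by_cases ha : ω ∈ A
        · have : X (t + 1) ω = w 0 := ha
          rw [this]
        · simp [ind, ha]
      have hst : StronglyMeasurable[MeasurableSpace.comap (tup X 0 t) inferInstance]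
          (fun ω => ψ (h t ω, w 0)) := by
        have : Measurable fun x => ψ (x, w 0) := hψ.comp (measurable_id.prodMk measurable_const)
        exact (this.comp (hhm t h1 (by omega))).stronglyMeasurable
      have e2 := condExp_mul_of_stronglyMeasurable_left (μ := μ)
          (m := MeasurableSpace.comap (tup X 0 t) inferInstance)
          (f := fun ω => ψ (h t ω, w 0)) (g := ind A) hst
          (by rw [aux_mul_ind]; exact hi.indicator hAm')
          (aux_ind_integrable μ hAm')
      rw [hAC]
      refine (condExp_condExp_of_le (hmono t) (hle (t + 1))).symm.trans ?_
      refine (condExp_congr_ae e1).trans (e2.trans ?_)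
      filter_upwards [hχe] with ω hω
      simp only [Pi.mul_apply]
      rw [hω]
  intro t h1 h2
  obtain ⟨n, hn⟩ : ∃ n, T - t = n + 1 := ⟨T - t - 1, by omega⟩
  rw [hn]
  exact main n t h1 (by omega)
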